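/- arXiv:1901.10892 — 3 statements merged into one kernel-verified Lean document; each statement's English description precedes it below -/
import Mathlib

section
/- If τ ⊢ β ∋ t : B is derivable over an architecture, then either β can compute terms of type B (i.e., β initially possesses a constructor of type B₁ → ⋯ → Bₙ → B for some types B₁, …, Bₙ, with n ≥ 0), or there is an event α →^{t:B} β occurring in τ for some agent α. -/
namespace PrivacyByDesign

/-- Object-level types over a set `σ` of atomic types. -/
inductive Ty (σ : Type) : Type where
  | atom : σ → Ty σ
  | arrow : Ty σ → Ty σ → Ty σ

/-- `Ty.arrows [A₁, …, Aₙ] B` is the type `A₁ → ⋯ → Aₙ → B`. -/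
def Ty.arrows {σ : Type} : List (Ty σ) → Ty σ → Ty σ
  | [], B => B
  | A :: As, B => Ty.arrow A (Ty.arrows As B)

/-- Rename the atomic types occurring in a type. -/
def Ty.mapAtom {σ σ' : Type} (f : σ → σ') : Ty σ → Ty σ'
  | .atom a => .atom (f a)
  | .arrow A B => .arrow (Ty.mapAtom f A) (Ty.mapAtom f B)

/-- Terms over a set `κ` of constructors. -/
inductive Tm (κ : Type) : Type where
  | con : κ → Tm κ
  | app : Tm κ → Tm κ → Tm κ

/-- `Tm.apps f [t₁, …, tₘ]` is the applied term `f t₁ ⋯ tₘ`. -/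
def Tm.apps {κ : Type} : Tm κ → List (Tm κ) → Tm κ
  | f, [] => f
  | f, t :: ts => Tm.apps (Tm.app f t) ts

/-- Rename the constructors occurring in a term. -/
def Tm.mapCon {κ κ' : Type} (g : κ → κ') : Tm κ → Tm κ'
  | .con c => .con (g c)
  | .app s t => .app (Tm.mapCon g s) (Tm.mapCon g t)

/-- An architecture over a type system: each constructor `c : κ` has the type `conTy c`;
`H α` is the set of constructors that agent `α` initially possesses; `M α β` is the set
of atomic types that `α` may send in a message to `β`. -/
structure Arch (Ag σ κ : Type) : Type where
  conTy : κ → Ty σ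
  H : Ag → Set κ
  M : Ag → Ag → Set σ

/-- An event `α →^{t : A} β`. -/
structure Event (Ag σ κ : Type) : Type where
  src : Ag
  tm : Tm κ
  ty : Ty σ
  tgt : Ag

/-- A trace is a finite sequence of events. -/
abbrev Trace (Ag σ κ : Type) : Type := List (Event Ag σ κ)

/-- The derivable judgements `τ ⊢ α ∋ t : A`, generated by the rules
(init), (message₁), (message₂) and (func). -/
inductive Deriv {Ag σ κ : Type} (𝒜 : Arch Ag σ κ) :
    Trace Ag σ κ → Ag → Tm κ → Ty σ → Prop where
  | init {α : Ag} {c : κ} :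
      c ∈ 𝒜.H α → Deriv 𝒜 [] α (Tm.con c) (𝒜.conTy c)
  | message₁ {τ : Trace Ag σ κ} {α β : Ag} {t : Tm κ} {A : σ} :
      A ∈ 𝒜.M α β → Deriv 𝒜 τ α t (Ty.atom A) →
      Deriv 𝒜 (τ ++ [⟨α, t, Ty.atom A, β⟩]) β t (Ty.atom A)
  | message₂ {τ : Trace Ag σ κ} {α β γ : Ag} {t s : Tm κ} {A : σ} {C : Ty σ} :
      A ∈ 𝒜.M α β → Deriv 𝒜 τ α t (Ty.atom A) → Deriv 𝒜 τ γ s C →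
      Deriv 𝒜 (τ ++ [⟨α, t, Ty.atom A, β⟩]) γ s C
  | func {τ : Trace Ag σ κ} {α : Ag} {f t : Tm κ} {A B : Ty σ} :
      Deriv 𝒜 τ α f (Ty.arrow A B) → Deriv 𝒜 τ α t A →
      Deriv 𝒜 τ α (Tm.app f t) B

/-- A trace `τ` is valid iff `τ ⊢ α ∋ t : A` is derivable for some `α`, `t`, `A`. -/
def ValidTrace {Ag σ κ : Type} (𝒜 : Arch Ag σ κ) (τ : Trace Ag σ κ) : Prop :=
  ∃ α t A, Deriv 𝒜 τ α t A

/-- Agent `α` can compute terms of (atomic) type `A` iff it initially possesses a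
constructor of type `B₁ → ⋯ → Bₙ → A` (with `n ≥ 0`). -/
def CanCompute {Ag σ κ : Type} (𝒜 : Arch Ag σ κ) (α : Ag) (A : σ) : Prop :=
  ∃ c ∈ 𝒜.H α, ∃ Bs : List (Ty σ), 𝒜.conTy c = Ty.arrows Bs (Ty.atom A)

/-- The chain of events `α₁ →^{t:B} α₂, …, αₙ₋₁ →^{t:B} αₙ` along the list
`αs = [α₁, …, αₙ]`. -/
def chainEvents {Ag σ κ : Type} (t : Tm κ) (B : Ty σ) (αs : List Ag) : Trace Ag σ κ :=
  List.zipWith (fun a b => Event.mk a t B b) αs αs.tail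

/-! By induction on the derivation. The crucial case is (func), where `β` applies some `f : A → B`:
since only terms of atomic type are ever sent, `f` was not received, so by induction `β` possesses
a constructor whose type ends in `A → B`, and hence in `B`. -/

section

variable {Ag σ κ : Type} {𝒜 : Arch Ag σ κ} {α : Ag}

theorem Ty.arrows_append (As Bs : List (Ty σ)) (C : Ty σ) :
    Ty.arrows (As ++ Bs) C = Ty.arrows As (Ty.arrows Bs C) := by
  induction As with
  | nil => rfl
  | cons A As ih => exact congrArg (Ty.arrow A) ih

/-- `CanCompute` extended from atomic types to arbitrary types; at `Ty.atom A` the two agree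
definitionally. -/
def CanComputeType (𝒜 : Arch Ag σ κ) (α : Ag) (B : Ty σ) : Prop :=
  ∃ c ∈ 𝒜.H α, ∃ Bs : List (Ty σ), 𝒜.conTy c = Ty.arrows Bs B

theorem CanComputeType.of_mem {c : κ} (hc : c ∈ 𝒜.H α) : CanComputeType 𝒜 α (𝒜.conTy c) :=
  ⟨c, hc, [], rfl⟩

theorem CanComputeType.codomain {A B : Ty σ} (h : CanComputeType 𝒜 α (Ty.arrow A B)) :
    CanComputeType 𝒜 α B := by
  obtain ⟨c, hc, Bs, hcBs⟩ := h
  exact ⟨c, hc, Bs ++ [A], hcBs.trans (Ty.arrows_append Bs [A] B).symm⟩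

theorem Deriv.exists_ty_eq_atom_of_mem {τ : Trace Ag σ κ} {t : Tm κ} {B : Ty σ}
    (h : Deriv 𝒜 τ α t B) {e : Event Ag σ κ} (he : e ∈ τ) :
    ∃ A ∈ 𝒜.M e.src e.tgt, e.ty = Ty.atom A := by
  induction h with
  | init _ => cases he
  | message₁ hA _ ih | message₂ hA _ _ ih _ =>
    rcases List.mem_append.1 he with he | he
    · exact ih he
    · obtain rfl := List.mem_singleton.1 he
      exact ⟨_, hA, rfl⟩
  | func _ _ ih _ => exact ih he

theorem Deriv.event_arrow_notMem {τ : Trace Ag σ κ} {t : Tm κ} {C : Ty σ}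
    (h : Deriv 𝒜 τ α t C) (β γ : Ag) (s : Tm κ) (A B : Ty σ) :
    Event.mk β s (Ty.arrow A B) γ ∉ τ := fun he =>
  let ⟨_, _, hty⟩ := h.exists_ty_eq_atom_of_mem he
  nomatch hty

end

/-- if `τ ⊢ β ∋ t : B`, then either `β` can compute terms of type `B`
(it initially possesses a constructor of type `B₁ → ⋯ → Bₙ → B`, `n ≥ 0`), or some
event `α →^{t:B} β` occurs in `τ`. -/
theorem possession_computed_or_received {Ag σ κ : Type} (𝒜 : Arch Ag σ κ)
    (τ : Trace Ag σ κ) (β : Ag) (t : Tm κ) (B : Ty σ)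
    (h : Deriv 𝒜 τ β t B) :
    (∃ c ∈ 𝒜.H β, ∃ Bs : List (Ty σ), 𝒜.conTy c = Ty.arrows Bs B) ∨
      (∃ α : Ag, Event.mk α t B β ∈ τ) := by
  change CanComputeType 𝒜 β B ∨ ∃ α : Ag, Event.mk α t B β ∈ τ
  induction h with
  | init hc => exact Or.inl (.of_mem hc)
  | message₁ _ _ _ => exact Or.inr ⟨_, List.mem_concat_self⟩
  | message₂ _ _ _ _ ih => exact ih.imp_right fun ⟨α, hα⟩ => ⟨α, List.mem_append_left _ hα⟩
  | func hf _ ihf _ =>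
    rcases ihf with hcomp | ⟨α, hα⟩
    · exact Or.inl hcomp.codomain
    · exact absurd hα (hf.event_arrow_notMem _ _ _ _ _)

end PrivacyByDesign
end

section
/- Let T be a type system, Ag a set of agents, and C a finite set of negative constraints of the form α ∋ A ⇒ B over T and Ag. Let B be an architecture over the safe type system T_C with agents Ag′ ⊇ Ag, equipped with a partition {P_α}_{α ∈ Ag} of Ag′ satisfying: α ∈ P_α; if β may send type A to β′ across different partition sets then A has the form C_γ(B); if β initially possesses π_{αA} then β ∈ P_α; for every constraint α ∋ A ⇒ B in C, any constructor with target A initially possessed by an agent of P_α is π_{αA}. Then for any valid trace τ through B, any constraint α ∋ A ⇒ B in C, and any agent β ∈ P_α: if τ ⊢ β ∋ t : A for some term t, then τ ⊢ B (i.e., some agent possesses a term of type B after τ). -/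
namespace PrivacyByDesign

/-- Atomic types of the safe type system `T_C` (first algorithm): the base atomic types
of `T` together with the certified types `C_α(A)`. -/
inductive SAtom (Ag σ : Type) : Type where
  | base : σ → SAtom Ag σ
  | cert : Ag → σ → SAtom Ag σ

/-- Constructors of the safe type system `T_C` (first algorithm): the base constructors
of `T`, the constructors `m_{αA}^{β₁⋯βₙ}` (with the choice of `β₁, …, βₙ ∈ Ag` given
as a function from indices), and the constructors `π_{αA}`. -/
inductive SCon (Ag σ κ : Type) : Type where
  | base : κ → SCon Ag σ κ
  | m : Ag → σ → (ℕ → Ag) → SCon Ag σ κ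
  | pi : Ag → σ → SCon Ag σ κ

/-- The typing of the constructors of `T_C`, where `Cs α A` lists the types
`B₁, …, Bₙ` such that the constraints of `C` beginning with `α ∋ A` are
`α ∋ A ⇒ B₁, …, α ∋ A ⇒ Bₙ`:
`m_{αA}^{β₁⋯βₙ} : A → C_{β₁}(B₁) → ⋯ → C_{βₙ}(Bₙ) → C_α(A)` and
`π_{αA} : C_α(A) → A`. -/
def safeConTy {Ag σ κ : Type} (conTy : κ → Ty σ) (Cs : Ag → σ → List σ) :
    SCon Ag σ κ → Ty (SAtom Ag σ)
  | .base c => Ty.mapAtom SAtom.base (conTy c)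
  | .m α A βf =>
      Ty.arrows
        (Ty.atom (SAtom.base A) ::
          List.mapIdx (fun i B => Ty.atom (SAtom.cert (βf i) B)) (Cs α A))
        (Ty.atom (SAtom.cert α A))
  | .pi α A => Ty.arrow (Ty.atom (SAtom.cert α A)) (Ty.atom (SAtom.base A))

/-!
Possession of a term of type `C_γ(A)` should guarantee that somebody possesses `A` and every `B`
with `γ ∋ A ⇒ B` in `C`, and possession of `A` inside `P_α` that somebody possesses every `B` with
`α ∋ A ⇒ B`. These guarantees concern atomic types only, whereas derivations also pass through
partially applied constructors. The invariant that survives application is that everything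
guaranteed by the final target of a possessed type `S₁ → ⋯ → Sₙ → a` is either already possessed or
is, or is guaranteed by, one of the atomic arguments still missing. Each application consumes one
argument, so nothing is left outstanding at an atomic type.
-/

/-- The atomic type `a` at the end of `A₁ → ⋯ → Aₙ → a`. -/
def Ty.target {σ : Type} : Ty σ → σ
  | .atom a => a
  | .arrow _ B => B.target

/-- The argument types `[A₁, …, Aₙ]` of `A₁ → ⋯ → Aₙ → a`. -/
def Ty.args {σ : Type} : Ty σ → List (Ty σ)
  | .atom _ => []
  | .arrow A B => A :: B.args

section Types

variable {σ σ' : Type}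

theorem Ty.arrows_args_target (T : Ty σ) : Ty.arrows T.args (.atom T.target) = T := by
  induction T with
  | atom a => rfl
  | arrow A B _ ihB => exact congrArg (Ty.arrow A) ihB

theorem Ty.target_arrows (As : List (Ty σ)) (B : Ty σ) : (Ty.arrows As B).target = B.target := by
  induction As with
  | nil => rfl
  | cons _ _ ih => exact ih

theorem Ty.args_arrows (As : List (Ty σ)) (B : Ty σ) :
    (Ty.arrows As B).args = As ++ B.args := by
  induction As with
  | nil => rfl
  | cons A As ih => exact congrArg (List.cons A) ih

theorem Ty.target_mapAtom (f : σ → σ') (T : Ty σ) : (T.mapAtom f).target = f T.target := by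
  induction T with
  | atom a => rfl
  | arrow _ _ _ ihB => exact ihB

end Types

section Guarantees

variable {Ag σ κ : Type} {𝒜 : Arch Ag σ κ} {G : Ag → σ → Set σ} {τ : Trace Ag σ κ}

/-- The judgement `τ ⊢ A`: some agent possesses a term of type `A` after `τ`. -/
def Possessed (𝒜 : Arch Ag σ κ) (τ : Trace Ag σ κ) (A : Ty σ) : Prop :=
  ∃ γ s, Deriv 𝒜 τ γ s A

theorem Possessed.append_event {α β : Ag} {t : Tm κ} {A : σ} {C : Ty σ} (hC : Possessed 𝒜 τ C)
    (hA : A ∈ 𝒜.M α β) (ht : Deriv 𝒜 τ α t (.atom A)) :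
    Possessed 𝒜 (τ ++ [⟨α, t, .atom A, β⟩]) C :=
  let ⟨γ, s, hs⟩ := hC
  ⟨γ, s, .message₂ hA ht hs⟩

/-- `G` is a system of guarantees for `𝒜`, where `b ∈ G β a` is meant to say that `b` is possessed
by some agent as soon as `β` possesses `a`: a constructor guarantees no more than its atomic
arguments provide, and a message guarantees no more to its receiver than to its sender. -/
structure Arch.IsGuarantee (𝒜 : Arch Ag σ κ) (G : Ag → σ → Set σ) : Prop where
  exists_arg : ∀ {β c}, c ∈ 𝒜.H β → ∀ b ∈ G β (𝒜.conTy c).target,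
    ∃ a, Ty.atom a ∈ (𝒜.conTy c).args ∧ (b = a ∨ b ∈ G β a)
  message_subset : ∀ {β β' a}, a ∈ 𝒜.M β β' → G β' a ⊆ G β a

/-- The invariant of derivations `τ ⊢ β ∋ t : T`: whatever the target of `T` guarantees to `β` is
possessed after `τ` or will be provided by an argument of `T`. -/
def Honoured (𝒜 : Arch Ag σ κ) (G : Ag → σ → Set σ) (τ : Trace Ag σ κ) (β : Ag) (T : Ty σ) :
    Prop :=
  ∀ b ∈ G β T.target,
    Possessed 𝒜 τ (.atom b) ∨ ∃ a, Ty.atom a ∈ T.args ∧ (b = a ∨ b ∈ G β a)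

theorem honoured_atom_iff {β : Ag} {a : σ} :
    Honoured 𝒜 G τ β (.atom a) ↔ ∀ b ∈ G β a, Possessed 𝒜 τ (.atom b) := by
  simp [Honoured, Ty.target, Ty.args]

theorem Honoured.append_event {α β γ : Ag} {t : Tm κ} {A : σ} {T : Ty σ}
    (hT : Honoured 𝒜 G τ γ T) (hA : A ∈ 𝒜.M α β) (ht : Deriv 𝒜 τ α t (.atom A)) :
    Honoured 𝒜 G (τ ++ [⟨α, t, .atom A, β⟩]) γ T :=
  fun b hb => (hT b hb).imp_left fun h => h.append_event hA ht

theorem Honoured.apply {β : Ag} {t : Tm κ} {S T : Ty σ}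
    (hST : Honoured 𝒜 G τ β (.arrow S T)) (hS : Honoured 𝒜 G τ β S) (ht : Deriv 𝒜 τ β t S) :
    Honoured 𝒜 G τ β T := by
  intro b hb
  obtain hpos | ⟨a, ha, hab⟩ := hST b hb
  · exact .inl hpos
  obtain rfl | haT := List.mem_cons.1 ha
  · obtain rfl | hba := hab
    · exact .inl ⟨β, t, ht⟩
    · exact .inl (honoured_atom_iff.1 hS b hba)
  · exact .inr ⟨a, haT, hab⟩

theorem Deriv.honoured (hG : 𝒜.IsGuarantee G) {β : Ag} {t : Tm κ} {T : Ty σ}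
    (d : Deriv 𝒜 τ β t T) : Honoured 𝒜 G τ β T := by
  induction d with
  | init hc => exact fun b hb => .inr (hG.exists_arg hc b hb)
  | message₁ hA ht ih =>
    exact honoured_atom_iff.2 fun b hb =>
      (honoured_atom_iff.1 ih b (hG.message_subset hA hb)).append_event hA ht
  | message₂ hA ht _ _ ih => exact ih.append_event hA ht
  | func _ ht ihf iht => exact ihf.apply iht ht

theorem Arch.IsGuarantee.possessed (hG : 𝒜.IsGuarantee G) {β : Ag} {t : Tm κ} {a b : σ}
    (d : Deriv 𝒜 τ β t (.atom a)) (hb : b ∈ G β a) : Possessed 𝒜 τ (.atom b) :=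
  honoured_atom_iff.1 (d.honoured hG) b hb

end Guarantees

section SafeTypeSystem

variable {Ag σ κ Ag' : Type} {conTy : κ → Ty σ} {Cs : Ag → σ → List σ}
  {ℬ : Arch Ag' (SAtom Ag σ) (SCon Ag σ κ)} {P : Ag → Set Ag'}

/-- The guarantees of `T_C`: an agent of `P_α` possessing `A` is guaranteed every `B` with
`α ∋ A ⇒ B`, and any agent possessing `C_γ(A)` is guaranteed `A` and every `B` with `γ ∋ A ⇒ B`. -/
def safeGuarantee (Cs : Ag → σ → List σ) (P : Ag → Set Ag') (β : Ag') :
    SAtom Ag σ → Set (SAtom Ag σ)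
  | .base A => {b | ∃ α B, β ∈ P α ∧ B ∈ Cs α A ∧ b = .base B}
  | .cert γ A => {b | b = .base A ∨ ∃ B ∈ Cs γ A, b = .base B}

theorem eq_m_of_target_safeConTy_eq_cert {c : SCon Ag σ κ} {γ : Ag} {A : σ}
    (h : (safeConTy conTy Cs c).target = .cert γ A) : ∃ βf, c = .m γ A βf := by
  cases c with
  | base c => simp [safeConTy, Ty.target_mapAtom] at h
  | m δ D βf =>
    obtain ⟨rfl, rfl⟩ : δ = γ ∧ D = A := by
      simpa [safeConTy, Ty.target_arrows, Ty.target] using h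
    exact ⟨βf, rfl⟩
  | pi δ D => simp [safeConTy, Ty.target] at h

theorem args_safeConTy_m (γ : Ag) (A : σ) (βf : ℕ → Ag) :
    (safeConTy conTy Cs (.m γ A βf)).args =
      .atom (.base A) :: (Cs γ A).mapIdx fun i B => .atom (.cert (βf i) B) := by
  simp [safeConTy, Ty.args_arrows, Ty.args]

theorem exists_arg_safeConTy_m (β : Ag') {γ : Ag} {A : σ} (βf : ℕ → Ag) {b : SAtom Ag σ}
    (hb : b ∈ safeGuarantee Cs P β (.cert γ A)) :
    ∃ a, Ty.atom a ∈ (safeConTy conTy Cs (.m γ A βf)).args ∧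
      (b = a ∨ b ∈ safeGuarantee Cs P β a) := by
  rw [args_safeConTy_m]
  obtain rfl | ⟨B, hB, rfl⟩ := hb
  · exact ⟨.base A, List.mem_cons_self, .inl rfl⟩
  · obtain ⟨i, hi, rfl⟩ := List.mem_iff_getElem.1 hB
    exact ⟨.cert (βf i) (Cs γ A)[i], List.mem_cons_of_mem _ (List.mem_mapIdx.2 ⟨i, hi, rfl⟩),
      .inr (.inl rfl)⟩

theorem isGuarantee_safeGuarantee (hty : ℬ.conTy = safeConTy conTy Cs)
    (hM : ∀ (β β' : Ag') (A : σ), .base A ∈ ℬ.M β β' → ∀ α, β' ∈ P α → β ∈ P α)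
    (hH : ∀ (α : Ag) (A B : σ), B ∈ Cs α A → ∀ β ∈ P α, ∀ c ∈ ℬ.H β,
      (∃ Ts, ℬ.conTy c = Ty.arrows Ts (.atom (.base A))) → c = .pi α A) :
    ℬ.IsGuarantee (safeGuarantee Cs P) where
  exists_arg {β c} hc b hb := by
    cases htarget : (ℬ.conTy c).target with
    | base A =>
      rw [htarget] at hb
      obtain ⟨α, B, hα, hB, rfl⟩ := hb
      obtain rfl : c = .pi α A :=
        hH α A B hB β hα c hc ⟨_, htarget ▸ (Ty.arrows_args_target _).symm⟩
      rw [hty]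
      exact ⟨.cert α A, List.mem_cons_self, .inr (.inr ⟨B, hB, rfl⟩)⟩
    | cert γ A =>
      rw [htarget] at hb
      rw [hty] at htarget ⊢
      obtain ⟨βf, rfl⟩ := eq_m_of_target_safeConTy_eq_cert htarget
      exact exists_arg_safeConTy_m β βf hb
  message_subset {β β' a} ha := by
    cases a with
    | base A => exact fun b ⟨α, B, hα, hB, hb⟩ => ⟨α, B, hM β β' A ha α hα, hB, hb⟩
    | cert γ A => exact subset_rfl

theorem mem_part_of_base_mem_M (hP : ∀ {x α γ}, x ∈ P α → x ∈ P γ → α = γ)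
    (hM : ∀ (β β' : Ag') (T : SAtom Ag σ), T ∈ ℬ.M β β' →
      (¬ ∃ α, β ∈ P α ∧ β' ∈ P α) → ∃ γ B, T = .cert γ B)
    (β β' : Ag') (A : σ) (hA : .base A ∈ ℬ.M β β') (α : Ag) (hα : β' ∈ P α) : β ∈ P α := by
  by_cases hshare : ∃ γ, β ∈ P γ ∧ β' ∈ P γ
  · obtain ⟨γ, hγ, hγ'⟩ := hshare
    rwa [hP hα hγ']
  · obtain ⟨γ, B, hcert⟩ := hM β β' _ hA hshare
    cases hcert

theorem safe_partition_generalized_general (hty : ℬ.conTy = safeConTy conTy Cs)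
    (hM : ∀ (β β' : Ag') (A : σ), .base A ∈ ℬ.M β β' → ∀ α, β' ∈ P α → β ∈ P α)
    (hH : ∀ (α : Ag) (A B : σ), B ∈ Cs α A → ∀ β ∈ P α, ∀ c ∈ ℬ.H β,
      (∃ Ts, ℬ.conTy c = Ty.arrows Ts (.atom (.base A))) → c = .pi α A)
    {τ : Trace Ag' (SAtom Ag σ) (SCon Ag σ κ)} {α : Ag} {A B : σ} (hB : B ∈ Cs α A)
    {β : Ag'} (hβ : β ∈ P α) {t : Tm (SCon Ag σ κ)} (d : Deriv ℬ τ β t (.atom (.base A))) :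
    Possessed ℬ τ (.atom (.base B)) :=
  (isGuarantee_safeGuarantee hty hM hH).possessed d ⟨α, B, hβ, hB, rfl⟩

end SafeTypeSystem

/-- the generalized claim in the proof of Theorem 1: under the same
hypotheses as Theorem 1, for any valid trace `τ` through `ℬ`, any constraint
`α ∋ A ⇒ B` in `C` and any agent `β ∈ P_α`, if `τ ⊢ β ∋ t : A` for some `t` then
`τ ⊢ B`, i.e. some agent possesses a term of type `B` after `τ`. -/
theorem safe_partition_generalized {Ag σ κ Ag' : Type}
    (conTy : κ → Ty σ) (Cs : Ag → σ → List σ)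
    (hfin : {p : Ag × σ | Cs p.1 p.2 ≠ []}.Finite)
    (ι : Ag → Ag') (hι : Function.Injective ι)
    (ℬ : Arch Ag' (SAtom Ag σ) (SCon Ag σ κ))
    (hty : ℬ.conTy = safeConTy conTy Cs)
    (P : Ag → Set Ag')
    (hpart : ∀ x : Ag', ∃! α : Ag, x ∈ P α)
    (h1 : ∀ α : Ag, ι α ∈ P α)
    (h2 : ∀ (β β' : Ag') (T : SAtom Ag σ), T ∈ ℬ.M β β' →
      (¬ ∃ α : Ag, β ∈ P α ∧ β' ∈ P α) → ∃ γ B, T = SAtom.cert γ B)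
    (h3 : ∀ (β : Ag') (α : Ag) (A : σ), SCon.pi α A ∈ ℬ.H β → β ∈ P α)
    (h4 : ∀ (α : Ag) (A B : σ), B ∈ Cs α A → ∀ β ∈ P α, ∀ c ∈ ℬ.H β,
      (∃ Ts : List (Ty (SAtom Ag σ)), ℬ.conTy c = Ty.arrows Ts (Ty.atom (SAtom.base A))) →
      c = SCon.pi α A) :
    ∀ τ : Trace Ag' (SAtom Ag σ) (SCon Ag σ κ), ValidTrace ℬ τ →
      ∀ (α : Ag) (A B : σ), B ∈ Cs α A →
        ∀ β' ∈ P α,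
          (∃ t, Deriv ℬ τ β' t (Ty.atom (SAtom.base A))) →
          ∃ γ s, Deriv ℬ τ γ s (Ty.atom (SAtom.base B)) := by
  rintro τ - α A B hB β hβ ⟨t, d⟩
  have hM := mem_part_of_base_mem_M (fun {x _ _} => (hpart x).unique) h2
  exact safe_partition_generalized_general hty hM h4 hB hβ d

end PrivacyByDesign
end

section
/- Let A be an architecture and C a finite set of constraints (negative constraints of the form α ∋ A ⇒ β ∋ B and positive constraints Pos(α, A)) such that for every negative constraint α ∋ A ⇒ β ∋ B in C, the agent α cannot compute terms of type A. Then every valid trace through the architecture Safe(A, C) produced by the second algorithm satisfies every negative constraint in C. -/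
namespace PrivacyByDesign

/-- Atomic types of the safe type system `T_C` with proof types (second algorithm):
the base atomic types of `T`, the certified types `C_α(A)` and the proof types
`P_α(A)`. -/
inductive SAtom2 (Ag σ : Type) : Type where
  | base : σ → SAtom2 Ag σ
  | cert : Ag → σ → SAtom2 Ag σ
  | prf : Ag → σ → SAtom2 Ag σ

/-- Constructors of the safe type system `T_C` (second algorithm): the base
constructors of `T` and the constructors `m_{αA}`, `π_{αA}` and `p_{αA}`. -/
inductive SCon2 (Ag σ κ : Type) : Type where
  | base : κ → SCon2 Ag σ κ
  | m : Ag → σ → SCon2 Ag σ κ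
  | pi : Ag → σ → SCon2 Ag σ κ
  | p : Ag → σ → SCon2 Ag σ κ

/-- The typing of the constructors of `T_C`, where `Cs α A` lists the pairs
`(β₁, B₁), …, (βₙ, Bₙ)` such that the negative constraints of `C` beginning with
`α ∋ A` are `α ∋ A ⇒ β₁ ∋ B₁, …, α ∋ A ⇒ βₙ ∋ Bₙ`:
`m_{αA} : A → P_{β₁}(B₁) → ⋯ → P_{βₙ}(Bₙ) → C_α(A)`,
`π_{αA} : C_α(A) → A` and `p_{αA} : A → P_α(A)`. -/
def safeConTy2 {Ag σ κ : Type} (conTy : κ → Ty σ) (Cs : Ag → σ → List (Ag × σ)) :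
    SCon2 Ag σ κ → Ty (SAtom2 Ag σ)
  | .base c => Ty.mapAtom SAtom2.base (conTy c)
  | .m α A =>
      Ty.arrows
        (Ty.atom (SAtom2.base A) ::
          List.map (fun q => Ty.atom (SAtom2.prf q.1 q.2)) (Cs α A))
        (Ty.atom (SAtom2.cert α A))
  | .pi α A => Ty.arrow (Ty.atom (SAtom2.cert α A)) (Ty.atom (SAtom2.base A))
  | .p α A => Ty.arrow (Ty.atom (SAtom2.base A)) (Ty.atom (SAtom2.prf α A))

/-- The second algorithm's `Safe(𝒜, C)`.  Its agents are those of `𝒜` (`Sum.inl α`)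
together with an input interface `I_α` (`Sum.inr (Sum.inl α)`) and an output interface
`O_α` (`Sum.inr (Sum.inr α)`) for each agent `α` of `𝒜`; its type system is `T_C`;
each agent of `𝒜` keeps its constructors; every output interface possesses all the
constructors `m_{αA}`, `I_α` possesses `π_{αA}`, and `O_α` possesses `p_{αA}`;
`I_α` may send any atomic type of `T` to `α`, and `α` may send any atomic type of `T`
to `O_α`; any two interfaces may send messages of type `C_α(A)` or `P_α(A)` to each
other. -/
def safeArch2 {Ag σ κ : Type} (𝒜 : Arch Ag σ κ) (Cs : Ag → σ → List (Ag × σ)) :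
    Arch (Ag ⊕ (Ag ⊕ Ag)) (SAtom2 Ag σ) (SCon2 Ag σ κ) where
  conTy := safeConTy2 𝒜.conTy Cs
  H := fun x =>
    match x with
    | .inl α => {c | ∃ c₀ ∈ 𝒜.H α, c = SCon2.base c₀}
    | .inr (.inl α) => {c | ∃ A, c = SCon2.pi α A}
    | .inr (.inr α) => {c | (∃ β A, c = SCon2.m β A) ∨ (∃ A, c = SCon2.p α A)}
  M := fun x y =>
    match x, y with
    | .inr (.inl γ), .inl α => {T | γ = α ∧ ∃ A, T = SAtom2.base A}
    | .inl α, .inr (.inr γ) => {T | γ = α ∧ ∃ A, T = SAtom2.base A}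
    | .inr _, .inr _ =>
        {T | (∃ α A, T = SAtom2.cert α A) ∨ (∃ α A, T = SAtom2.prf α A)}
    | _, _ => ∅

/-!
Fix a trace `τ` through `Safe(𝒜, C)` and read every type as a proposition about what is possessed
after `τ`: `P_α(A)` says `α ∋ A`, and `C_α(A)` says that the consequents of all constraints
`α ∋ A ⇒ β ∋ B` are possessed. An atomic type `A` of `𝒜` means `C_α(A)` when held by `I_α`, means
`α ∋ A` when held by `O_α`, and for `α` itself means `C_α(A)` or that `α` can compute `A`. Under
this reading the types of all constructors are valid and messages preserve truth, so the type of
every possessed term is true. If `α` cannot compute `A`, its possession of `A` therefore means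
`C_α(A)`.
-/

/-- `A.Holds V` reads the type `A` as a proposition: an atomic type `a` stands for `V a` and a
function type for an implication. -/
def Ty.Holds {σ : Type} (V : σ → Prop) : Ty σ → Prop
  | .atom a => V a
  | .arrow A B => A.Holds V → B.Holds V

namespace Ty

variable {σ σ' : Type}

theorem holds_arrows {V : σ → Prop} {As : List (Ty σ)} {B : Ty σ} :
    (arrows As B).Holds V ↔ ((∀ A ∈ As, A.Holds V) → B.Holds V) := by
  induction As with
  | nil => simp only [arrows, List.not_mem_nil, false_implies, implies_true, true_implies]
  | cons A As ih => simp only [arrows, Holds, ih, List.forall_mem_cons, and_imp]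

theorem holds_mapAtom {f : σ → σ'} {V : σ' → Prop} {A : Ty σ} :
    (A.mapAtom f).Holds V ↔ A.Holds (V ∘ f) := by
  induction A with
  | atom a => rfl
  | arrow A B ihA ihB => simp only [mapAtom, Holds, ihA, ihB]

theorem exists_eq_arrows_atom (A : Ty σ) : ∃ Bs a, A = arrows Bs (atom a) := by
  induction A with
  | atom a => exact ⟨[], a, rfl⟩
  | arrow A B _ ihB =>
    obtain ⟨Bs, a, rfl⟩ := ihB
    exact ⟨A :: Bs, a, rfl⟩

end Ty

section Architecture

variable {Ag σ κ : Type} {𝒜 : Arch Ag σ κ}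

/-- The judgement `τ ⊢ α ∋ A`: after the trace `τ`, agent `α` possesses some term of type `A`. -/
def Possesses (𝒜 : Arch Ag σ κ) (τ : Trace Ag σ κ) (α : Ag) (A : Ty σ) : Prop :=
  ∃ t, Deriv 𝒜 τ α t A

theorem Deriv.of_prefix {τ₀ τ : Trace Ag σ κ} {α : Ag} {t : Tm κ} {A : Ty σ}
    (h : Deriv 𝒜 τ₀ α t A) (hpre : τ₀ <+: τ) (hτ : ValidTrace 𝒜 τ) : Deriv 𝒜 τ α t A := by
  obtain ⟨_, _, _, hτ⟩ := hτ
  induction hτ with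
  | init => exact List.prefix_nil.1 hpre ▸ h
  | message₁ hM hsrc ih =>
    rcases List.prefix_concat_iff.1 hpre with rfl | hpre
    · exact h
    · exact .message₂ hM hsrc (ih hpre)
  | message₂ hM hsrc _ ih =>
    rcases List.prefix_concat_iff.1 hpre with rfl | hpre
    · exact h
    · exact .message₂ hM hsrc (ih hpre)
  | func _ _ ih => exact ih hpre

/- The trace `τ` occurring in `hM` stays fixed while the derivation runs over its prefixes: `V` will
refer to what is possessed after `τ`, and `Ty.Holds V` is not monotone in `V` at function types. -/
theorem Deriv.holds {τ₀ τ : Trace Ag σ κ} {V : Ag → σ → Prop}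
    (hH : ∀ α, ∀ c ∈ 𝒜.H α, (𝒜.conTy c).Holds (V α))
    (hM : ∀ α β, ∀ A ∈ 𝒜.M α β, Possesses 𝒜 τ α (.atom A) → V α A → V β A)
    (hτ : ValidTrace 𝒜 τ) (hpre : τ₀ <+: τ) {α : Ag} {t : Tm κ} {A : Ty σ}
    (h : Deriv 𝒜 τ₀ α t A) : A.Holds (V α) := by
  induction h with
  | init hc => exact hH _ _ hc
  | message₁ hA hsrc ih =>
    have hpre' := (List.prefix_append _ _).trans hpre
    exact hM _ _ _ hA ⟨_, hsrc.of_prefix hpre' hτ⟩ (ih hpre')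
  | message₂ _ _ _ _ ih => exact ih ((List.prefix_append _ _).trans hpre)
  | func _ _ ihf iht => exact ihf hpre (iht hpre)

theorem holds_conTy_of_canCompute {α : Ag} {c : κ} (hc : c ∈ 𝒜.H α) {V : σ → Prop}
    (hV : ∀ A, CanCompute 𝒜 α A → V A) : (𝒜.conTy c).Holds V := by
  obtain ⟨Bs, A, hcA⟩ := (𝒜.conTy c).exists_eq_arrows_atom
  rw [hcA, Ty.holds_arrows]
  exact fun _ => hV A ⟨c, hc, Bs, hcA⟩

end Architecture

section SafeArchitecture

variable {Ag σ κ : Type} {𝒜 : Arch Ag σ κ} {Cs : Ag → σ → List (Ag × σ)} {K : Ag → σ → Prop}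

/-- `SafeGuarantee 𝒜 Cs K x a` is what the possession of the atomic type `a` by the agent `x` of
`Safe(𝒜, C)` reveals about the predicate `K`, where `K β B` is to be read as `β ∋ B`. Certified
types and proof types mean the same to every agent, whereas the meaning of an atomic type of `𝒜`
depends on who holds it. -/
def SafeGuarantee (𝒜 : Arch Ag σ κ) (Cs : Ag → σ → List (Ag × σ)) (K : Ag → σ → Prop) :
    Ag ⊕ (Ag ⊕ Ag) → SAtom2 Ag σ → Prop
  | _, .cert α A => ∀ q ∈ Cs α A, K q.1 q.2
  | _, .prf α A => K α A
  | .inl α, .base A => CanCompute 𝒜 α A ∨ ∀ q ∈ Cs α A, K q.1 q.2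
  | .inr (.inl α), .base A => ∀ q ∈ Cs α A, K q.1 q.2
  | .inr (.inr α), .base A => K α A

theorem holds_safeGuarantee_conTy (x : Ag ⊕ (Ag ⊕ Ag)) (c : SCon2 Ag σ κ)
    (hc : c ∈ (safeArch2 𝒜 Cs).H x) :
    ((safeArch2 𝒜 Cs).conTy c).Holds (SafeGuarantee 𝒜 Cs K x) := by
  rcases x with α | α | γ
  · obtain ⟨c₀, hc₀, rfl⟩ := hc
    exact Ty.holds_mapAtom.2 (holds_conTy_of_canCompute hc₀ fun _ => Or.inl)
  · obtain ⟨A, rfl⟩ := hc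
    exact id
  · obtain ⟨α, A, rfl⟩ | ⟨A, rfl⟩ := hc
    · refine Ty.holds_arrows.2 fun hargs q hq => ?_
      exact hargs (.atom (.prf q.1 q.2)) (List.mem_cons_of_mem _ (List.mem_map_of_mem hq))
    · exact id

theorem SafeGuarantee.of_message {x y : Ag ⊕ (Ag ⊕ Ag)} {a : SAtom2 Ag σ}
    (ha : a ∈ (safeArch2 𝒜 Cs).M x y) (hK : ∀ α A, x = .inl α → a = .base A → K α A)
    (hx : SafeGuarantee 𝒜 Cs K x a) : SafeGuarantee 𝒜 Cs K y a := by
  rcases x with α | α | α <;> rcases y with β | β | β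
  case inl.inr.inr =>
    obtain ⟨rfl, A, rfl⟩ := ha
    exact hK β A rfl rfl
  case inr.inl.inl =>
    obtain ⟨rfl, A, rfl⟩ := ha
    exact Or.inr hx
  case inl.inl | inl.inr.inl | inr.inr.inl => exact ha.elim
  all_goals obtain ⟨_, _, rfl⟩ | ⟨_, _, rfl⟩ := ha <;> exact hx

theorem safeArch2_neg_constraints_general {τ : Trace (Ag ⊕ (Ag ⊕ Ag)) (SAtom2 Ag σ) (SCon2 Ag σ κ)}
    {α β : Ag} {A B : σ} (hmem : (β, B) ∈ Cs α A) (hcc : ¬ CanCompute 𝒜 α A)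
    (hA : Possesses (safeArch2 𝒜 Cs) τ (.inl α) (.atom (.base A))) :
    Possesses (safeArch2 𝒜 Cs) τ (.inl β) (.atom (.base B)) := by
  obtain ⟨t, ht⟩ := hA
  let K : Ag → σ → Prop := fun γ C => Possesses (safeArch2 𝒜 Cs) τ (.inl γ) (.atom (.base C))
  have hsend : ∀ x y, ∀ a ∈ (safeArch2 𝒜 Cs).M x y, Possesses (safeArch2 𝒜 Cs) τ x (.atom a) →
      SafeGuarantee 𝒜 Cs K x a → SafeGuarantee 𝒜 Cs K y a := by
    intro x y a ha hpos
    exact SafeGuarantee.of_message ha (by rintro γ C rfl rfl; exact hpos)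
  have hguar : SafeGuarantee 𝒜 Cs K (.inl α) (.base A) :=
    ht.holds holds_safeGuarantee_conTy hsend ⟨_, _, _, ht⟩ List.prefix_rfl
  exact hguar.resolve_left hcc (β, B) hmem

end SafeArchitecture

/-- let `C` consist of negative constraints `α ∋ A ⇒ β ∋ B` (given by
`Cs`) and positive constraints (given by `Pos`), both finite, such that for every
negative constraint `α ∋ A ⇒ β ∋ B` in `C` the agent `α` cannot compute terms of
type `A`.  Then every valid trace through the second algorithm's `Safe(𝒜, C)`
satisfies every negative constraint in `C`. -/
theorem safeArch2_neg_constraints {Ag σ κ : Type}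
    (𝒜 : Arch Ag σ κ) (Cs : Ag → σ → List (Ag × σ)) (Pos : Set (Ag × σ))
    (hfin : {p : Ag × σ | Cs p.1 p.2 ≠ []}.Finite) (hfinPos : Pos.Finite)
    (hcc : ∀ (α : Ag) (A : σ) (β : Ag) (B : σ), (β, B) ∈ Cs α A →
      ¬ CanCompute 𝒜 α A) :
    ∀ τ : Trace (Ag ⊕ (Ag ⊕ Ag)) (SAtom2 Ag σ) (SCon2 Ag σ κ),
      ValidTrace (safeArch2 𝒜 Cs) τ →
      ∀ (α : Ag) (A : σ) (β : Ag) (B : σ), (β, B) ∈ Cs α A →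
        ∀ τ', τ' <+: τ →
          (∃ t, Deriv (safeArch2 𝒜 Cs) τ' (Sum.inl α) t (Ty.atom (SAtom2.base A))) →
          ∃ s, Deriv (safeArch2 𝒜 Cs) τ' (Sum.inl β) s (Ty.atom (SAtom2.base B)) := by
  intro τ _ α A β B hmem τ' _ hA
  exact safeArch2_neg_constraints_general hmem (hcc α A β B hmem) hA

end PrivacyByDesign
end
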